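/- arXiv:2401.17147 — 3 statements merged into one kernel-verified Lean document; each statement's English description precedes it below -/
import Mathlib

section
/- Let {y_n}_{n≥0} be a sequence of positive real numbers satisfying the recursive inequalities y_{n+1} ≤ c bⁿ y_n^{1+α} for all n ≥ 0, where b > 1 and c, α ∈ (0,∞). If y₀ ≤ c^{−1/α} b^{−1/α²}, then lim_{n→∞} y_n = 0. -/
/-!
Let `K = c^(-1/α) b^(-1/α²)` be the bound on `y 0` and `r = b^(-1/α) < 1`. Since `r^α = b⁻¹` and
`K^α = c⁻¹ r`, the geometric sequence `K rⁿ` satisfies the recursion with equality. As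
`t ↦ t^(1+α)` is increasing, induction gives `y n ≤ K rⁿ`, and the right side tends to `0`.
-/

open Filter Topology

/-- If a sequence of positive numbers satisfies
`y_{n+1} ≤ c bⁿ y_n^{1+α}` with `b > 1`, `c, α > 0`, and
`y₀ ≤ c^{−1/α} b^{−1/α²}`, then `y_n → 0`. -/
theorem de_giorgi_fast_convergence (y : ℕ → ℝ) (b c α : ℝ)
    (hy : ∀ n, 0 < y n) (hb : 1 < b) (hc : 0 < c) (hα : 0 < α)
    (hrec : ∀ n, y (n + 1) ≤ c * b ^ n * y n ^ (1 + α))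
    (h0 : y 0 ≤ c ^ (-1 / α) * b ^ (-1 / α ^ 2)) :
    Tendsto y atTop (𝓝 0) := by
  have hb0 : 0 < b := by linarith
  set K : ℝ := c ^ (-1 / α) * b ^ (-1 / α ^ 2) with hK
  set r : ℝ := b ^ (-1 / α) with hr
  have hKpos : 0 < K := by positivity
  have hrpos : 0 < r := by positivity
  have hr1 : r < 1 :=
    Real.rpow_lt_one_of_one_lt_of_neg hb (div_neg_of_neg_of_pos (by norm_num) hα)
  have hrα : r ^ α = b⁻¹ := by
    rw [hr, ← Real.rpow_mul hb0.le, div_mul_cancel₀ _ hα.ne', Real.rpow_neg_one]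
  have hKα : K ^ α = c⁻¹ * r := by
    rw [hK, Real.mul_rpow (by positivity) (by positivity), ← Real.rpow_mul hc.le,
      ← Real.rpow_mul hb0.le, div_mul_cancel₀ _ hα.ne', Real.rpow_neg_one, hr]
    congr 2
    field_simp
  have bound : ∀ n, y n ≤ K * r ^ n := by
    intro n
    induction n with
    | zero => simpa using h0
    | succ n ih =>
      have hpow : (K * r ^ n) ^ α = c⁻¹ * r * (b⁻¹) ^ n := by
        rw [Real.mul_rpow hKpos.le (by positivity), hKα, ← Real.rpow_natCast r n,
          ← Real.rpow_mul hrpos.le, mul_comm (n : ℝ) α,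
          Real.rpow_mul hrpos.le, hrα, Real.rpow_natCast]
      calc y (n + 1) ≤ c * b ^ n * y n ^ (1 + α) := hrec n
        _ ≤ c * b ^ n * (K * r ^ n) ^ (1 + α) := by
          gcongr
          exact (hy n).le
        _ = K * r ^ (n + 1) := by
          rw [Real.rpow_add (by positivity), Real.rpow_one, hpow, inv_pow, pow_succ]
          field_simp
  have hlim : Tendsto (fun n : ℕ => K * r ^ n) atTop (𝓝 0) := by
    simpa using (tendsto_pow_atTop_nhds_zero_of_lt_one hrpos.le hr1).const_mul K
  exact squeeze_zero (fun n => (hy n).le) bound hlim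
end

section
/- Let (Q, μ) be a measure space, r > 0, and u a measurable function on Q such that 0 < ∫_Q |u|^{2s} dμ < ∞ for all s in a neighborhood of r and ∫_Q |u|^{2r} |ln|u|| dμ < ∞. Then lim_{ℓ→r} ( ‖u‖_{2ℓ,Q} / ‖u‖_{2r,Q} )^{1/(ℓ−r)} = ‖u‖_{2r,Q}^{−1/r} · exp( (∫_Q |u|^{2r} ln|u| dμ) / ( r ∫_Q |u|^{2r} dμ ) ). -/
open MeasureTheory Filter Topology

/-!
Write `I s = ∫ |u|^{2s}` and `G s = log (I s) / (2 s)`, so that the quantity under the limit is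
`exp ((G ℓ - G r) / (ℓ - r))`. The limit is therefore `exp (G' r)`, and
`G' r = I' r / (2 r I r) - log (I r) / (2 r²)`. It remains to differentiate `I` under the integral
sign (`hasDerivAt_integral_abs_rpow`), giving `I' r = 2 ∫ |u|^{2r} log |u|`. The domination comes
from absorbing the logarithm into a small power of `|u|` (`rpow_mul_abs_log_le`): near `r` the
derivative of the integrand is bounded by a multiple of `|u|^{2(r+d)} + |u|^{2(r-d)}`, which is
integrable by hypothesis.
-/

/-- Uniform bound for `s` near `r`; the first power dominates for `a ≥ 1`, the second for
`a ≤ 1`. -/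
lemma rpow_mul_abs_log_le {a r d s : ℝ} (ha : 0 ≤ a) (hd : 0 < d)
    (hs : |s - r| < d / 2) :
    a ^ (2 * s) * |Real.log a| ≤ (a ^ (2 * (r + d)) + a ^ (2 * (r - d))) / d := by
  obtain ⟨h1, h2⟩ := abs_lt.1 hs
  rcases ha.eq_or_lt with rfl | ha
  · simp only [Real.log_zero, abs_zero, mul_zero]
    positivity
  rcases le_total 1 a with h | h
  · rw [abs_of_nonneg (Real.log_nonneg h)]
    calc a ^ (2 * s) * Real.log a ≤ a ^ (2 * r + d) * (a ^ d / d) := by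
          gcongr
          · exact Real.log_nonneg h
          · linarith
          · exact Real.log_le_rpow_div ha.le hd
      _ = a ^ (2 * (r + d)) / d := by
          rw [← mul_div_assoc, ← Real.rpow_add ha]
          ring_nf
      _ ≤ _ := by
          gcongr
          exact le_add_of_nonneg_right (by positivity)
  · rw [abs_of_nonpos (Real.log_nonpos ha.le h), ← Real.log_inv]
    calc a ^ (2 * s) * Real.log a⁻¹ ≤ a ^ (2 * r - d) * (a⁻¹ ^ d / d) := by
          refine mul_le_mul (Real.rpow_le_rpow_of_exponent_ge ha h (by linarith))
            (Real.log_le_rpow_div (by positivity) hd)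
            (Real.log_nonneg ((one_le_inv₀ ha).2 h)) (by positivity)
      _ = a ^ (2 * (r - d)) / d := by
          rw [Real.inv_rpow ha.le, ← Real.rpow_neg ha.le, ← mul_div_assoc, ← Real.rpow_add ha]
          ring_nf
      _ ≤ _ := by
          gcongr
          exact le_add_of_nonneg_left (by positivity)

lemma hasDerivAt_rpow_two_mul {a s : ℝ} (ha : 0 ≤ a) (hs : 0 < s) :
    HasDerivAt (fun t : ℝ => a ^ (2 * t)) (2 * (a ^ (2 * s) * Real.log a)) s := by
  rcases ha.eq_or_lt with rfl | ha
  · -- For base `0` the function is locally constant on positive exponents.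
    have : (fun t : ℝ => (0 : ℝ) ^ (2 * t)) =ᶠ[𝓝 s] fun _ => 0 := by
      filter_upwards [lt_mem_nhds hs] with t ht
      exact Real.zero_rpow (by positivity)
    simpa using (hasDerivAt_const s (0 : ℝ)).congr_of_eventuallyEq this
  · have h := ((hasDerivAt_id s).const_mul (2 : ℝ)).const_rpow ha
    have e : Real.log a * (2 * 1) * a ^ (2 * s) = 2 * (a ^ (2 * s) * Real.log a) := by ring
    exact e ▸ h

lemma hasDerivAt_integral_abs_rpow {Q : Type*} [MeasurableSpace Q]
    (μ : Measure Q) (r : ℝ) (hr : 0 < r) (u : Q → ℝ) (hu : Measurable u)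
    (hnear : ∃ ε > (0:ℝ), ∀ s : ℝ, |s - r| < ε → Integrable (fun x => |u x| ^ (2 * s)) μ) :
    HasDerivAt (fun s : ℝ => ∫ x, |u x| ^ (2 * s) ∂μ)
      (2 * ∫ x, |u x| ^ (2 * r) * Real.log |u x| ∂μ) r := by
  obtain ⟨ε, hε, h⟩ := hnear
  set d := min ε r / 2 with hd_def
  have hm : 0 < min ε r := lt_min hε hr
  have hd : 0 < d := by positivity
  have hdr : d < r := by linarith [min_le_right ε r]
  have hdε : d < ε := by linarith [min_le_left ε r]
  have hu' : Measurable fun x => |u x| := measurable_norm.comp hu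
  rw [← integral_const_mul]
  refine (hasDerivAt_integral_of_dominated_loc_of_deriv_le
    (F := fun s x => |u x| ^ (2 * s))
    (F' := fun s x => 2 * (|u x| ^ (2 * s) * Real.log |u x|))
    (bound := fun x => 2 * ((|u x| ^ (2 * (r + d)) + |u x| ^ (2 * (r - d))) / d))
    (Metric.ball_mem_nhds r (half_pos hd)) ?_ ?_ ?_ ?_ ?_ ?_).2
  · exact Eventually.of_forall fun s => (hu'.pow_const _).aestronglyMeasurable
  · exact h r (by simpa using hε)
  · exact (((hu'.pow_const _).mul hu'.log).const_mul 2).aestronglyMeasurable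
  · refine Eventually.of_forall fun x s hs => ?_
    rw [Metric.mem_ball, Real.dist_eq] at hs
    have := rpow_mul_abs_log_le (abs_nonneg (u x)) hd hs
    rw [norm_mul, norm_mul, Real.norm_eq_abs (Real.log _),
      Real.norm_of_nonneg (Real.rpow_nonneg (abs_nonneg (u x)) _), Real.norm_two]
    gcongr
  · refine (((h (r + d) ?_).add (h (r - d) ?_)).div_const d).const_mul 2
    · rw [add_sub_cancel_left, abs_of_pos hd]
      exact hdε
    · rw [sub_sub_cancel_left, abs_neg, abs_of_pos hd]
      exact hdε
  · refine Eventually.of_forall fun x s hs => ?_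
    rw [Metric.mem_ball, Real.dist_eq] at hs
    exact hasDerivAt_rpow_two_mul (abs_nonneg _) (by linarith [(abs_lt.1 hs).1])

/-- For a measurable `u` on a measure space `(Q,μ)` with
`0 < ∫ |u|^{2s} < ∞` for all `s` near `r > 0` and `∫ |u|^{2r}|ln|u|| < ∞`,
`lim_{ℓ→r} (‖u‖_{2ℓ}/‖u‖_{2r})^{1/(ℓ−r)}
  = ‖u‖_{2r}^{−1/r} exp( (∫ |u|^{2r} ln|u|) / (r ∫ |u|^{2r}) )`. -/
theorem lp_norm_logarithmic_derivative {Q : Type*} [MeasurableSpace Q]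
    (μ : Measure Q) (r : ℝ) (hr : 0 < r) (u : Q → ℝ) (hu : Measurable u)
    (hnear : ∃ ε > (0:ℝ), ∀ s : ℝ, |s - r| < ε →
      Integrable (fun x => |u x| ^ (2 * s)) μ ∧ 0 < ∫ x, |u x| ^ (2 * s) ∂μ)
    (hlog : Integrable (fun x => |u x| ^ (2 * r) * |Real.log (abs (u x))|) μ) :
    Tendsto
      (fun ℓ : ℝ =>
        ((∫ x, |u x| ^ (2 * ℓ) ∂μ) ^ (1 / (2 * ℓ)) /
            (∫ x, |u x| ^ (2 * r) ∂μ) ^ (1 / (2 * r))) ^ (1 / (ℓ - r)))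
      (𝓝[≠] r)
      (𝓝 (((∫ x, |u x| ^ (2 * r) ∂μ) ^ (1 / (2 * r))) ^ (-(1 / r)) *
        Real.exp ((∫ x, |u x| ^ (2 * r) * Real.log |u x| ∂μ) /
          (r * ∫ x, |u x| ^ (2 * r) ∂μ)))) := by
  have hI := hasDerivAt_integral_abs_rpow μ r hr u hu
    (hnear.imp fun ε h => ⟨h.1, fun s hs => (h.2 s hs).1⟩)
  obtain ⟨ε, hε, h⟩ := hnear
  set I : ℝ → ℝ := fun s => ∫ x, |u x| ^ (2 * s) ∂μ with hI_def
  set J : ℝ := ∫ x, |u x| ^ (2 * r) * Real.log |u x| ∂μ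
  have hIr : 0 < I r := (h r (by simpa using hε)).2
  change Tendsto (fun ℓ : ℝ => (I ℓ ^ (1 / (2 * ℓ)) / I r ^ (1 / (2 * r))) ^ (1 / (ℓ - r)))
    (𝓝[≠] r) (𝓝 ((I r ^ (1 / (2 * r))) ^ (-(1 / r)) * Real.exp (J / (r * I r))))
  have hG : HasDerivAt (fun s => Real.log (I s) / (2 * s))
      ((2 * J / I r * (2 * r) - Real.log (I r) * (2 * 1)) / (2 * r) ^ 2) r :=
    (hI.log hIr.ne').div ((hasDerivAt_id r).const_mul (2 : ℝ)) (by simpa using hr.ne')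
  have hlim := (Real.continuous_exp.tendsto _).comp hG.tendsto_slope
  have hval : (I r ^ (1 / (2 * r))) ^ (-(1 / r)) * Real.exp (J / (r * I r)) =
      Real.exp ((2 * J / I r * (2 * r) - Real.log (I r) * (2 * 1)) / (2 * r) ^ 2) := by
    rw [← Real.rpow_mul hIr.le, Real.rpow_def_of_pos hIr, ← Real.exp_add]
    congr 1
    field_simp
    ring
  rw [hval]
  refine hlim.congr' ?_
  filter_upwards [nhdsWithin_le_nhds (Metric.ball_mem_nhds r hε)] with s hs
  have hIs : 0 < I s := (h s hs).2
  rw [Function.comp_apply, slope_def_field, Real.rpow_def_of_pos hIs, Real.rpow_def_of_pos hIr,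
    ← Real.exp_sub, ← Real.exp_mul]
  congr 1
  ring
end

section
/- Let (Q, μ) be a measure space, 0 < q < r, and u a measurable function on Q with 0 < ∫_Q |u|^{2q} dμ < ∞, 0 < ∫_Q |u|^{2r} dμ < ∞, and ∫_Q |u|^{2r} |ln|u|| dμ < ∞. Then (∫_Q |u|^{2r} ln|u| dμ) / (∫_Q |u|^{2r} dμ) ≥ [ ln(∫_Q |u|^{2r} dμ) − ln(∫_Q |u|^{2q} dμ) ] / (2(r−q)). -/
open MeasureTheory

/-!
Write `A = ∫ |u|^{2r}`, `B = ∫ |u|^{2q}` and `c = 2(r - q)`. Jensen's inequality for `s ↦ s ln s`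
is obtained from its supporting line at the mean `A / B` of `s = |u|^c`: in the form
`ln y ≤ y - 1` with `y = (A / B) / s`, multiplied by `|u|^{2r}`, it reads
`|u|^{2r} (ln A - ln B - c ln|u|) ≤ (A / B) |u|^{2q} - |u|^{2r}`,
and the right-hand side integrates to `(A / B) B - A = 0`.
-/

/-- The supporting-line inequality for `s ↦ s ln s`, with `s = t ^ (2 * (r - q))`, at the point
`A / B`, multiplied by `t ^ (2 * q)`. -/
lemma rpow_mul_log_tangent {q r A B t : ℝ} (hr : 0 < r) (hA : 0 < A) (hB : 0 < B)
    (ht : 0 ≤ t) (hq : 0 < q) :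
    t ^ (2 * r) * (Real.log A - Real.log B) - 2 * (r - q) * (t ^ (2 * r) * Real.log t) ≤
      A / B * t ^ (2 * q) - t ^ (2 * r) := by
  rcases ht.eq_or_lt with rfl | ht
  · rw [Real.zero_rpow (by positivity), Real.zero_rpow (by positivity)]
    simp
  · have hy : 0 < t ^ (2 * q) / t ^ (2 * r) := by positivity
    have h := Real.log_le_sub_one_of_pos (mul_pos (div_pos hA hB) hy)
    rw [Real.log_mul (by positivity) hy.ne', Real.log_div hA.ne' hB.ne',
      Real.log_div (by positivity) (by positivity), Real.log_rpow ht, Real.log_rpow ht] at h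
    have hpos : 0 < t ^ (2 * r) := by positivity
    calc _ = t ^ (2 * r) *
          (Real.log A - Real.log B + (2 * q * Real.log t - 2 * r * Real.log t)) := by ring
      _ ≤ t ^ (2 * r) * (A / B * (t ^ (2 * q) / t ^ (2 * r)) - 1) :=
          mul_le_mul_of_nonneg_left h hpos.le
      _ = _ := by field_simp

/-- Jensen-type inequality: for `0 < q < r` and a measurable `u`
with `0 < ∫ |u|^{2q} < ∞`, `0 < ∫ |u|^{2r} < ∞`, `∫ |u|^{2r}|ln|u|| < ∞`,
`(∫ |u|^{2r} ln|u|) / (∫ |u|^{2r}) ≥ [ln(∫ |u|^{2r}) − ln(∫ |u|^{2q})] / (2(r−q))`. -/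
theorem log_moment_jensen_bound {Q : Type*} [MeasurableSpace Q] (μ : Measure Q)
    (q r : ℝ) (hq : 0 < q) (hqr : q < r) (u : Q → ℝ) (hu : Measurable u)
    (hqi : Integrable (fun x => |u x| ^ (2 * q)) μ)
    (hqpos : 0 < ∫ x, |u x| ^ (2 * q) ∂μ)
    (hri : Integrable (fun x => |u x| ^ (2 * r)) μ)
    (hrpos : 0 < ∫ x, |u x| ^ (2 * r) ∂μ)
    (hlog : Integrable (fun x => |u x| ^ (2 * r) * |Real.log (abs (u x))|) μ) :
    (∫ x, |u x| ^ (2 * r) * Real.log |u x| ∂μ) / (∫ x, |u x| ^ (2 * r) ∂μ) ≥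
      (Real.log (∫ x, |u x| ^ (2 * r) ∂μ) - Real.log (∫ x, |u x| ^ (2 * q) ∂μ)) /
        (2 * (r - q)) := by
  have hc : 0 < 2 * (r - q) := by linarith
  have hlog' : Integrable (fun x => |u x| ^ (2 * r) * Real.log |u x|) μ := by
    refine hlog.mono (by fun_prop) (Filter.Eventually.of_forall fun x => ?_)
    simp
  have h := integral_mono
    ((hri.mul_const (Real.log (∫ x, |u x| ^ (2 * r) ∂μ) -
      Real.log (∫ x, |u x| ^ (2 * q) ∂μ))).sub (hlog'.const_mul (2 * (r - q))))
    ((hqi.const_mul ((∫ x, |u x| ^ (2 * r) ∂μ) / ∫ x, |u x| ^ (2 * q) ∂μ)).sub hri)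
    (fun x => rpow_mul_log_tangent (hq.trans hqr) hrpos hqpos (abs_nonneg (u x)) hq)
  simp only [Pi.sub_apply] at h
  rw [integral_sub (hri.mul_const _) (hlog'.const_mul _), integral_sub (hqi.const_mul _) hri,
    integral_mul_const, integral_const_mul, integral_const_mul,
    div_mul_cancel₀ _ hqpos.ne', sub_self] at h
  rw [ge_iff_le, div_le_div_iff₀ hc hrpos]
  linarith
end
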